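/- arXiv:2410.04892 — 2 statements merged into one kernel-verified Lean document; each statement's English description precedes it below -/
import Mathlib

section
/- One has e₀(Λ_τ(0)) = 1 for all τ ∈ ℍ, and for every integer k ≥ 1 the lowering operator satisfies L(e_k(Λ_τ(0))) = (π/2) · e_{k−1}(Λ_τ(0)) for all τ ∈ ℍ, where e_k(Λ_τ(0)) is viewed as a smooth function of τ = u + iv. -/
/-!
Put `w = z²` and `cₖ = (-1)ᵏ eₖ(Λ_τ(0))`. Dividing the generating identity by `z` gives
`∑ cₖ wᵏ = exp (∑_{j ≥ 1} pⱼ wʲ)` near `w = 0`, where `p₁ = 2π² Ĝ₂` and, for `j ≥ 2`, `pⱼ` is a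
constant multiple of `G_{2j}`. Since `G_{2j}/(2j)!` grows at most geometrically in `j`
(`exists_norm_Gser_le`), the exponent is a genuine power series, and comparing coefficients in
`(exp P)' = P' exp P` yields `c₀ = 1` and `k cₖ = ∑_{j=1}^{k} j pⱼ c_{k-j}`
(`exp_coeff_recursion`).

The operator `L` is a derivation that kills holomorphic functions and satisfies `L(1/v) = -1`.
The `G_{2j}` are holomorphic on the upper half-plane, so `L p₁ = -π/2` and `L pⱼ = 0` for `j ≥ 2`.
Applying `L` to the recursion and arguing by strong induction,
`L(k cₖ) = -(π/2) (c_{k-1} + ∑_{j=1}^{k-1} j pⱼ c_{k-1-j}) = -(π/2) (1 + (k - 1)) c_{k-1}`,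
that is, `L cₖ = -(π/2) c_{k-1}` (`hasLowering_signed_coeff`), which is the claim up to signs.
-/

open Complex Filter
open scoped Real

noncomputable section

/-- `q = e^{2πiτ}`. -/
def qq (τ : ℂ) : ℂ := Complex.exp (2 * (π : ℂ) * Complex.I * τ)

/-- The Eisenstein series `G_{2k}(τ) = -B_{2k}/(2k) + 2 ∑_{n≥1} σ_{2k-1}(n) qⁿ`. -/
def Gser (k : ℕ) (τ : ℂ) : ℂ :=
  -((bernoulli (2 * k) : ℚ) : ℂ) / (2 * k) +
    2 * ∑' n : ℕ, ((ArithmeticFunction.sigma (2 * k - 1)) (n + 1) : ℂ) * qq τ ^ (n + 1)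

/-- The completed Eisenstein series `Ĝ₂(τ) = G₂(τ) + 1/(4πv)`. -/
def Ghat2 (τ : ℂ) : ℂ := Gser 1 τ + 1 / (4 * (π : ℂ) * (τ.im : ℂ))

/-- The right-hand side `z · exp(−Ĝ₂(τ)(2πiz)²/2 − ∑_{k≥2} G_{2k}(τ)(2πiz)^{2k}/(2k)!)`
of the generating identity defining the `e_k(Λ_τ(0))`. -/
def genRHS (τ z : ℂ) : ℂ :=
  z * Complex.exp (-(Ghat2 τ) * (2 * (π : ℂ) * Complex.I * z) ^ 2 / 2 -
    ∑' k : ℕ, Gser (k + 2) τ * (2 * (π : ℂ) * Complex.I * z) ^ (2 * (k + 2)) /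
      (Nat.factorial (2 * (k + 2)) : ℂ))

/-- The lowering operator `L = -2iv² ∂/∂τ̄`, where `∂/∂τ̄ = (1/2)(∂/∂u + i ∂/∂v)`. -/
def lowerOp (f : ℂ → ℂ) (τ : ℂ) : ℂ :=
  -2 * Complex.I * (τ.im : ℂ) ^ 2 *
    ((1 / 2 : ℂ) * (fderiv ℝ f τ 1 + Complex.I * fderiv ℝ f τ Complex.I))

open scoped Topology

/-! ### Power series coefficients of an exponential -/

/-- The coefficients of a convergent power series are the Taylor coefficients of its sum. -/
lemma analyticAt_and_iteratedDeriv_of_hasSum {f : ℂ → ℂ} {a : ℕ → ℂ}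
    (h : ∀ᶠ w in 𝓝 (0 : ℂ), HasSum (fun n => a n * w ^ n) (f w)) :
    AnalyticAt ℂ f 0 ∧ ∀ n, iteratedDeriv n f 0 = n.factorial * a n := by
  have hf : HasFPowerSeriesAt f (FormalMultilinearSeries.ofScalars ℂ a) 0 := by
    rw [hasFPowerSeriesAt_iff]
    filter_upwards [h] with w hw
    simpa [mul_comm] using hw
  refine ⟨hf.analyticAt, fun n => ?_⟩
  have h2 := hf.eq_formalMultilinearSeries hf.analyticAt.hasFPowerSeriesAt
  have h3 := congrArg (fun p => FormalMultilinearSeries.coeff p n) h2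
  simp only [FormalMultilinearSeries.coeff_ofScalars] at h3
  rw [h3, mul_div_cancel₀ _ (by exact_mod_cast n.factorial_ne_zero)]

/-- If `∑ cₖ wᵏ = exp (∑ pₖ wᵏ)` near (but away from) `0` and `p₀ = 0`, then `c₀ = 1`, and comparing
coefficients in `(exp P)' = P' exp P` gives a recursion for the `cₖ`. The point `w = 0` itself is
not needed in the hypothesis, by continuity. -/
lemma exp_coeff_recursion {c p : ℕ → ℂ} {P : ℂ → ℂ} (hp0 : p 0 = 0)
    (hc : ∀ᶠ w in 𝓝[≠] (0 : ℂ), HasSum (fun n => c n * w ^ n) (cexp (P w)))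
    (hP : ∀ᶠ w in 𝓝 (0 : ℂ), HasSum (fun n => p n * w ^ n) (P w)) :
    c 0 = 1 ∧ ∀ k : ℕ, (k : ℂ) * c k =
      ∑ i ∈ Finset.range k, ((i : ℂ) + 1) * p (i + 1) * c (k - 1 - i) := by
  obtain ⟨hPan, hPd⟩ := analyticAt_and_iteratedDeriv_of_hasSum hP
  have hP0 : P 0 = 0 := by simpa [hp0] using hPd 0
  set f : ℂ → ℂ := fun w => ∑' n, c n * w ^ n with hf
  have hfs : ∀ᶠ w in 𝓝 (0 : ℂ), HasSum (fun n => c n * w ^ n) (f w) := by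
    rw [eventually_nhdsWithin_iff] at hc
    filter_upwards [hc] with w hw
    by_cases h0 : w = 0
    · subst h0
      exact (hasSum_single 0 (by intro n hn; simp [hn])).summable.hasSum
    · exact (hw h0).summable.hasSum
  obtain ⟨hfan, hfd⟩ := analyticAt_and_iteratedDeriv_of_hasSum hfs
  have hexp : AnalyticAt ℂ (fun w => cexp (P w)) 0 := hPan.cexp
  have heq : f =ᶠ[𝓝 0] fun w => cexp (P w) := by
    have hpun : ∀ᶠ w in 𝓝[≠] (0 : ℂ), f w = cexp (P w) := by
      filter_upwards [hc] with w hw using hw.tsum_eq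
    exact (hfan.frequently_eq_iff_eventually_eq hexp).1 hpun.frequently
  have hc0 : c 0 = 1 := by
    have := hfd 0
    simp only [iteratedDeriv_zero, Nat.factorial_zero, Nat.cast_one, one_mul] at this
    rw [← this, heq.eq_of_nhds, hP0, Complex.exp_zero]
  refine ⟨hc0, fun k => ?_⟩
  rcases k with _ | k
  · simp
  have hder : deriv f =ᶠ[𝓝 0] deriv P * f := by
    have h1 := heq.deriv
    filter_upwards [h1, heq, hPan.eventually_analyticAt] with w h1 h2 h3
    rw [h1, Pi.mul_apply, h2]
    have := (h3.differentiableAt.hasDerivAt.cexp).deriv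
    rw [this, mul_comm]
  have key : iteratedDeriv (k + 1) f 0 = ∑ i ∈ Finset.range (k + 1),
      (k.choose i : ℂ) * iteratedDeriv (i + 1) P 0 * iteratedDeriv (k - i) f 0 := by
    rw [iteratedDeriv_succ', hder.iteratedDeriv_eq k,
      iteratedDeriv_mul hPan.deriv.contDiffAt hfan.contDiffAt]
    simp only [iteratedDeriv_succ']
  simp only [hfd, hPd] at key
  have hk : (k.factorial : ℂ) ≠ 0 := by exact_mod_cast k.factorial_ne_zero
  apply mul_left_cancel₀ hk
  rw [Nat.factorial_succ] at key
  push_cast at key ⊢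
  rw [← mul_assoc, mul_comm (k.factorial : ℂ), key, Finset.mul_sum]
  refine Finset.sum_congr rfl fun i hi => ?_
  have hik : i ≤ k := Nat.lt_succ_iff.1 (Finset.mem_range.1 hi)
  have hch := congrArg (Nat.cast (R := ℂ)) (Nat.choose_mul_factorial_mul_factorial hik)
  push_cast at hch
  rw [← hch, Nat.factorial_succ]
  push_cast
  ring

/-! ### The lowering operator as a derivation -/

/-- `f` is real differentiable at `τ` and `L f (τ) = l`. -/
def HasLowering (f : ℂ → ℂ) (l τ : ℂ) : Prop :=
  DifferentiableAt ℝ f τ ∧ lowerOp f τ = l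

lemma HasLowering.congr {f g : ℂ → ℂ} {l τ : ℂ} (h : HasLowering f l τ) (hg : g =ᶠ[𝓝 τ] f) :
    HasLowering g l τ :=
  ⟨h.1.congr_of_eventuallyEq hg, by rw [← h.2, lowerOp, lowerOp, hg.fderiv_eq]⟩

lemma HasLowering.mul {f g : ℂ → ℂ} {l m τ : ℂ} (hf : HasLowering f l τ)
    (hg : HasLowering g m τ) : HasLowering (fun x => f x * g x) (l * g τ + f τ * m) τ := by
  refine ⟨hf.1.mul hg.1, ?_⟩
  rw [← hf.2, ← hg.2]
  simp only [lowerOp]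
  rw [fderiv_fun_mul hf.1 hg.1]
  simp
  ring

lemma HasLowering.sum {s : Finset ℕ} {f : ℕ → ℂ → ℂ} {l : ℕ → ℂ} {τ : ℂ}
    (h : ∀ i ∈ s, HasLowering (f i) (l i) τ) :
    HasLowering (fun x => ∑ i ∈ s, f i x) (∑ i ∈ s, l i) τ := by
  have hd : ∀ i ∈ s, DifferentiableAt ℝ (f i) τ := fun i hi => (h i hi).1
  refine ⟨DifferentiableAt.fun_sum hd, ?_⟩
  rw [← Finset.sum_congr rfl fun i hi => (h i hi).2]
  simp only [lowerOp]
  rw [fderiv_fun_sum hd]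
  simp only [_root_.sum_apply, Finset.mul_sum, ← Finset.sum_add_distrib]

/-- The Cauchy–Riemann equations: `L` kills holomorphic functions. -/
lemma HasLowering.of_differentiableAt {f : ℂ → ℂ} {τ : ℂ} (h : DifferentiableAt ℂ f τ) :
    HasLowering f 0 τ := by
  refine ⟨h.restrictScalars ℝ, ?_⟩
  simp only [lowerOp]
  rw [h.fderiv_restrictScalars ℝ]
  have : fderiv ℂ f τ I = I * fderiv ℂ f τ 1 := by
    rw [← smul_eq_mul, ← map_smul, smul_eq_mul, mul_one]
  simp only [ContinuousLinearMap.coe_restrictScalars', this, ← mul_assoc, I_mul_I]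
  ring

lemma HasLowering.add {f g : ℂ → ℂ} {l m τ : ℂ} (hf : HasLowering f l τ)
    (hg : HasLowering g m τ) : HasLowering (fun x => f x + g x) (l + m) τ := by
  refine ⟨hf.1.add hg.1, ?_⟩
  rw [← hf.2, ← hg.2]
  simp only [lowerOp]
  rw [fderiv_fun_add hf.1 hg.1]
  simp
  ring

lemma HasLowering.const_mul {f : ℂ → ℂ} {l τ : ℂ} (a : ℂ) (hf : HasLowering f l τ) :
    HasLowering (fun x => a * f x) (a * l) τ := by
  simpa using (HasLowering.of_differentiableAt (differentiableAt_const a)).mul hf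

/-- `L v = v²`, where `v = Im τ`. -/
lemma hasLowering_im (τ : ℂ) : HasLowering (fun x => (x.im : ℂ)) ((τ.im : ℂ) ^ 2) τ := by
  have h : HasFDerivAt (𝕜 := ℝ) (fun x : ℂ => (x.im : ℂ)) (ofRealCLM.comp imCLM) τ :=
    (ofRealCLM.comp imCLM).hasFDerivAt
  refine ⟨h.differentiableAt, ?_⟩
  simp only [lowerOp]
  rw [h.fderiv]
  simp
  linear_combination -(τ.im : ℂ) ^ 2 * I_mul_I

/-- `L (1/v) = -1`, the only source of non-holomorphy in `Ĝ₂`. -/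
lemma hasLowering_inv_im {τ : ℂ} (hτ : 0 < τ.im) :
    HasLowering (fun x => ((x.im : ℂ))⁻¹) (-1) τ := by
  have hne : (τ.im : ℂ) ≠ 0 := by exact_mod_cast hτ.ne'
  have hd : DifferentiableAt ℝ (fun x : ℂ => ((x.im : ℂ))⁻¹) τ :=
    (hasLowering_im τ).1.inv hne
  refine ⟨hd, ?_⟩
  -- Apply the Leibniz rule to `v * v⁻¹ = 1`.
  have h1 := (hasLowering_im τ).mul ⟨hd, rfl⟩
  have h2 : HasLowering (fun _ : ℂ => (1 : ℂ)) 0 τ :=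
    .of_differentiableAt (differentiableAt_const _)
  have hev : (fun x : ℂ => (x.im : ℂ) * ((x.im : ℂ))⁻¹) =ᶠ[𝓝 τ] fun _ => 1 := by
    filter_upwards [(isOpen_lt continuous_const continuous_im).mem_nhds hτ] with x hx
    exact mul_inv_cancel₀ (by exact_mod_cast (ne_of_gt hx))
  have h3 := h1.2.symm.trans (h2.congr hev).2
  rw [sq, mul_assoc, mul_inv_cancel₀ hne, ← mul_add] at h3
  have h4 := (mul_eq_zero.1 h3).resolve_left hne
  linear_combination h4

/-! ### Eisenstein series: holomorphy and growth in the weight -/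

lemma norm_qq (τ : ℂ) : ‖qq τ‖ = Real.exp (-(2 * π * τ.im)) := by
  rw [qq, Complex.norm_exp]
  congr 1
  simp

lemma norm_sigma_term_le {k : ℕ} (hk : 1 ≤ k) (n : ℕ) (τ : ℂ) :
    ‖((ArithmeticFunction.sigma (2 * k - 1)) (n + 1) : ℂ) * qq τ ^ (n + 1)‖ ≤
      ((n + 1 : ℕ) : ℝ) ^ (2 * k) * Real.exp (-(2 * π * τ.im)) ^ (n + 1) := by
  rw [norm_mul, norm_pow, norm_qq, Complex.norm_natCast]
  gcongr
  have h := ArithmeticFunction.sigma_le_pow_succ (2 * k - 1) (n + 1)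
  rw [show 2 * k - 1 + 1 = 2 * k by omega] at h
  exact_mod_cast h

lemma summable_succ_pow_mul_geometric (m : ℕ) {r : ℝ} (hr : ‖r‖ < 1) :
    Summable fun n : ℕ => ((n + 1 : ℕ) : ℝ) ^ m * r ^ (n + 1) :=
  (summable_nat_add_iff (f := fun n : ℕ => (n : ℝ) ^ m * r ^ n) 1).2
    (summable_pow_mul_geometric_of_norm_lt_one m hr)

lemma exp_neg_two_pi_mul_lt_one {y : ℝ} (hy : 0 < y) : ‖Real.exp (-(2 * π * y))‖ < 1 := by
  rw [Real.norm_eq_abs, abs_of_pos (Real.exp_pos _), Real.exp_lt_one_iff, neg_lt_zero]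
  have := Real.pi_pos
  positivity

lemma differentiableAt_Gser {k : ℕ} (hk : 1 ≤ k) {τ : ℂ} (hτ : 0 < τ.im) :
    DifferentiableAt ℂ (Gser k) τ := by
  have hU : IsOpen {x : ℂ | τ.im / 2 < x.im} := isOpen_lt continuous_const continuous_im
  have hmem : τ ∈ {x : ℂ | τ.im / 2 < x.im} := half_lt_self hτ
  have hsum := summable_succ_pow_mul_geometric (2 * k) (exp_neg_two_pi_mul_lt_one (half_pos hτ))
  have hd : DifferentiableOn ℂ (fun x : ℂ => ∑' n : ℕ,
      ((ArithmeticFunction.sigma (2 * k - 1)) (n + 1) : ℂ) * qq x ^ (n + 1))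
      {x : ℂ | τ.im / 2 < x.im} := by
    refine differentiableOn_tsum_of_summable_norm hsum (fun n => ?_) hU fun n x hx => ?_
    · unfold qq
      fun_prop
    · refine (norm_sigma_term_le hk n x).trans ?_
      have hx' : τ.im / 2 < x.im := hx
      gcongr
  exact ((hd.differentiableAt (hU.mem_nhds hmem)).const_mul 2).const_add
    (-((bernoulli (2 * k) : ℚ) : ℂ) / (2 * k))

lemma norm_bernoulli_le {k : ℕ} (hk : 1 ≤ k) :
    ‖((bernoulli (2 * k) : ℚ) : ℂ)‖ ≤ (∑' n : ℕ, 1 / (n : ℝ) ^ 2) * (2 * k).factorial := by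
  have h1 := hasSum_zeta_nat (k := k) (by omega)
  have h2 : Summable fun n : ℕ => 1 / (n : ℝ) ^ 2 := Real.summable_one_div_nat_pow.2 (by norm_num)
  have hle := hasSum_le (fun n : ℕ => ?_) h1 h2.hasSum
  swap
  · rcases Nat.eq_zero_or_pos n with rfl | hn
    · simp [show k ≠ 0 by omega]
    · have : (1 : ℝ) ≤ n := by exact_mod_cast hn
      exact one_div_le_one_div_of_le (by positivity) (pow_le_pow_right₀ this (by omega))
  have hnn : 0 ≤ (-1 : ℝ) ^ (k + 1) * (2 : ℝ) ^ (2 * k - 1) * π ^ (2 * k) *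
      bernoulli (2 * k) / (2 * k).factorial := h1.nonneg fun n => by positivity
  rw [← abs_of_nonneg hnn] at hle
  have hπ : (1 : ℝ) ≤ π := by linarith [Real.pi_gt_three]
  have hF : (0 : ℝ) < (2 * k).factorial := by exact_mod_cast Nat.factorial_pos _
  rw [abs_div, abs_mul, abs_mul, abs_mul, abs_pow, abs_neg, abs_one, one_pow, one_mul,
    abs_of_pos hF, abs_of_pos (by positivity : (0 : ℝ) < 2 ^ (2 * k - 1)),
    abs_of_pos (by positivity : (0 : ℝ) < π ^ (2 * k)), div_le_iff₀ hF] at hle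
  refine le_trans ?_ hle
  have : ‖((bernoulli (2 * k) : ℚ) : ℂ)‖ = |((bernoulli (2 * k) : ℚ) : ℝ)| := by
    rw [← Complex.ofReal_ratCast, Complex.norm_real, Real.norm_eq_abs]
  rw [this]
  refine le_mul_of_one_le_left (abs_nonneg _) ?_
  exact one_le_mul_of_one_le_of_one_le (one_le_pow₀ (by norm_num)) (one_le_pow₀ hπ)

/-- For fixed `τ`, the quantities `G_{2k}(τ)/(2k)!` grow at most geometrically in `k`, so that the
series in the exponent of `genRHS` converges near `z = 0`. -/
lemma exists_norm_Gser_le {τ : ℂ} (hτ : 0 < τ.im) :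
    ∃ C T : ℝ, 0 < T ∧ ∀ k : ℕ, 1 ≤ k →
      ‖Gser k τ‖ ≤ C * T ^ (2 * k) * (2 * k).factorial := by
  have hπ := Real.pi_pos
  set t : ℝ := π * τ.im with ht
  have ht0 : 0 < t := by positivity
  set s : ℝ := Real.exp (-t) with hs
  have hs0 : 0 < s := Real.exp_pos _
  have hs1 : s < 1 := by rw [hs, Real.exp_lt_one_iff]; linarith
  have hsum : Summable fun n : ℕ => s ^ (n + 1) :=
    (summable_nat_add_iff 1).2 (summable_geometric_of_lt_one hs0.le hs1)
  set S : ℝ := ∑' n : ℕ, s ^ (n + 1) with hS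
  have hS0 : 0 ≤ S := tsum_nonneg fun n => by positivity
  set Z : ℝ := ∑' n : ℕ, 1 / (n : ℝ) ^ 2 with hZ
  have hZ0 : 0 ≤ Z := tsum_nonneg fun n => by positivity
  refine ⟨Z + 2 * S, 1 + t⁻¹, by positivity, fun k hk => ?_⟩
  have hF : (0 : ℝ) < (2 * k).factorial := by exact_mod_cast Nat.factorial_pos _
  have hB : ‖-((bernoulli (2 * k) : ℚ) : ℂ) / (2 * k)‖ ≤ Z * (2 * k).factorial := by
    rw [norm_div, norm_neg]
    refine le_trans (div_le_self (norm_nonneg _) ?_) (norm_bernoulli_le hk)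
    have : ‖(2 * k : ℂ)‖ = 2 * k := by simp
    rw [this]
    have : (1 : ℝ) ≤ k := by exact_mod_cast hk
    linarith
  -- `σ_{2k-1}(m) ≤ m^{2k} ≤ t^{-2k} (2k)! e^{mt}`, while `|q|^m = e^{-2mt}`.
  have hQ : ‖∑' n : ℕ, ((ArithmeticFunction.sigma (2 * k - 1)) (n + 1) : ℂ) * qq τ ^ (n + 1)‖ ≤
      t⁻¹ ^ (2 * k) * (2 * k).factorial * S := by
    refine tsum_of_norm_bounded (hsum.hasSum.mul_left _) fun n => ?_
    refine (norm_sigma_term_le hk n τ).trans ?_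
    have h1 := Real.pow_div_factorial_le_exp (x := ((n + 1 : ℕ) : ℝ) * t) (by positivity) (2 * k)
    rw [div_le_iff₀ hF, mul_pow] at h1
    have h2 : Real.exp (-(2 * π * τ.im)) ^ (n + 1) =
        s ^ (n + 1) * Real.exp (-(((n + 1 : ℕ) : ℝ) * t)) := by
      rw [hs, ← Real.exp_nat_mul, ← Real.exp_nat_mul, ← Real.exp_add, ht]
      congr 1
      ring
    have h3 : ((n + 1 : ℕ) : ℝ) ^ (2 * k) * Real.exp (-(((n + 1 : ℕ) : ℝ) * t)) ≤
        t⁻¹ ^ (2 * k) * (2 * k).factorial := by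
      rw [Real.exp_neg, inv_pow, ← div_eq_mul_inv, div_le_iff₀ (Real.exp_pos _), mul_assoc,
        ← div_eq_inv_mul, le_div_iff₀ (by positivity)]
      linarith
    rw [h2]
    calc _ = (((n + 1 : ℕ) : ℝ) ^ (2 * k) * Real.exp (-(((n + 1 : ℕ) : ℝ) * t))) * s ^ (n + 1) := by
          ring
      _ ≤ _ := by gcongr
  have hT1 : 1 ≤ (1 + t⁻¹) ^ (2 * k) := one_le_pow₀ (by linarith [inv_pos.2 ht0])
  have hT2 : t⁻¹ ^ (2 * k) ≤ (1 + t⁻¹) ^ (2 * k) := by gcongr; linarith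
  calc ‖Gser k τ‖ ≤ Z * (2 * k).factorial + 2 * (t⁻¹ ^ (2 * k) * (2 * k).factorial * S) := by
        unfold Gser
        refine (norm_add_le _ _).trans (add_le_add hB ?_)
        rw [norm_mul, Complex.norm_ofNat]
        gcongr
    _ ≤ Z * ((1 + t⁻¹) ^ (2 * k) * (2 * k).factorial) +
        2 * ((1 + t⁻¹) ^ (2 * k) * (2 * k).factorial * S) := by
        gcongr
        exact le_mul_of_one_le_left hF.le hT1
    _ = _ := by ring

/-! ### The exponent of the generating function -/

/-- The coefficients, in the variable `w = z²`, of the exponent of `genRHS`. -/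
def expCoeff : ℕ → ℂ → ℂ
  | 0, _ => 0
  | 1, τ => -(Ghat2 τ) * (2 * (π : ℂ) * I) ^ 2 / 2
  | j + 2, τ => -(Gser (j + 2) τ * (2 * (π : ℂ) * I) ^ (2 * (j + 2)) /
      (Nat.factorial (2 * (j + 2)) : ℂ))

/-- The exponent of `genRHS`, as a function of `w = z²`. -/
def expSeries (τ w : ℂ) : ℂ := ∑' n, expCoeff n τ * w ^ n

lemma hasSum_expSeries {τ : ℂ} (hτ : 0 < τ.im) :
    ∀ᶠ w in 𝓝 (0 : ℂ), HasSum (fun n => expCoeff n τ * w ^ n) (expSeries τ w) := by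
  obtain ⟨C, T, hT, hG⟩ := exists_norm_Gser_le hτ
  have hπ := Real.pi_pos
  have hR : 0 < ((T * (2 * π)) ^ 2)⁻¹ := by positivity
  filter_upwards [Metric.ball_mem_nhds (0 : ℂ) hR] with w hw
  rw [mem_ball_zero_iff] at hw
  refine Summable.hasSum ((summable_nat_add_iff 2).1 ?_)
  have hx : (T * (2 * π)) ^ 2 * ‖w‖ < 1 := by
    rwa [← one_div, lt_div_iff₀ (by positivity), mul_comm] at hw
  have hgeo : Summable fun j : ℕ => C * ((T * (2 * π)) ^ 2 * ‖w‖) ^ (j + 2) :=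
    ((summable_nat_add_iff 2).2 (summable_geometric_of_lt_one (by positivity) hx)).mul_left C
  refine Summable.of_norm_bounded hgeo fun j => ?_
  have hF : (0 : ℝ) < (2 * (j + 2)).factorial := by exact_mod_cast Nat.factorial_pos _
  have h2 : ‖2 * (π : ℂ) * I‖ = 2 * π := by simp [abs_of_pos hπ]
  rw [expCoeff, norm_mul, norm_neg, norm_div, norm_mul, norm_pow, norm_pow, h2,
    Complex.norm_natCast]
  calc _ ≤ (C * T ^ (2 * (j + 2)) * (2 * (j + 2)).factorial) * (2 * π) ^ (2 * (j + 2)) /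
        (2 * (j + 2)).factorial * ‖w‖ ^ (j + 2) := by
        gcongr
        exact hG (j + 2) (by omega)
    _ = _ := by
        rw [mul_pow ((T * (2 * π)) ^ 2), ← pow_mul, mul_pow T]
        field_simp

lemma genRHS_eq {τ : ℂ} (hτ : 0 < τ.im) :
    ∀ᶠ w in 𝓝 (0 : ℂ), ∀ z : ℂ, z ^ 2 = w → genRHS τ z = z * cexp (expSeries τ w) := by
  filter_upwards [hasSum_expSeries hτ] with w hw z hz
  rw [genRHS, expSeries, ← hw.summable.sum_add_tsum_nat_add 2, sub_eq_add_neg, ← tsum_neg]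
  congr 3
  · simp only [Finset.sum_range_succ, Finset.sum_range_zero, expCoeff, ← hz]
    ring
  · refine tsum_congr fun j => ?_
    rw [expCoeff, ← hz]
    ring

lemma hasLowering_Ghat2 {τ : ℂ} (hτ : 0 < τ.im) : HasLowering Ghat2 (-(1 / (4 * (π : ℂ)))) τ := by
  have h := (HasLowering.of_differentiableAt (differentiableAt_Gser le_rfl hτ)).add
    ((hasLowering_inv_im hτ).const_mul (1 / (4 * (π : ℂ))))
  have hfun : Ghat2 = fun x => Gser 1 x + 1 / (4 * (π : ℂ)) * ((x.im : ℂ))⁻¹ := by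
    funext x
    rw [Ghat2, ← div_eq_mul_inv, div_div]
  rw [hfun]
  simpa using h

lemma hasLowering_expCoeff_succ (i : ℕ) {τ : ℂ} (hτ : 0 < τ.im) :
    HasLowering (expCoeff (i + 1)) (if i = 0 then -((π : ℂ) / 2) else 0) τ := by
  have hπ : (π : ℂ) ≠ 0 := by exact_mod_cast Real.pi_ne_zero
  rcases i with _ | i
  · have h := (hasLowering_Ghat2 hτ).const_mul (2 * (π : ℂ) ^ 2)
    have hfun : expCoeff (0 + 1) = fun x => 2 * (π : ℂ) ^ 2 * Ghat2 x := by
      funext x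
      simp only [expCoeff]
      linear_combination (-2 * (π : ℂ) ^ 2 * Ghat2 x) * I_sq
    rw [hfun]
    convert h using 1
    simp only [if_true]
    field_simp
    ring
  · have hG : DifferentiableAt ℂ (Gser (i + 2)) τ := differentiableAt_Gser (by omega) hτ
    have hd : DifferentiableAt ℂ (expCoeff (i + 1 + 1)) τ :=
      ((hG.mul_const ((2 * (π : ℂ) * I) ^ (2 * (i + 2)))).div_const
        (Nat.factorial (2 * (i + 2)) : ℂ)).neg
    simpa using HasLowering.of_differentiableAt hd

/-- The recursion for the signed coefficients `(-1)ᵏ eₖ` of the generating function in `z²`. -/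
lemma signed_coeff_recursion {e : ℕ → ℂ → ℂ}
    (he : ∀ τ : ℂ, 0 < τ.im → ∃ ε > 0, ∀ z : ℂ, ‖z‖ < ε →
      HasSum (fun k : ℕ => (-1 : ℂ) ^ k * e k τ * z ^ (2 * k + 1)) (genRHS τ z))
    {τ : ℂ} (hτ : 0 < τ.im) :
    (-1 : ℂ) ^ 0 * e 0 τ = 1 ∧ ∀ k : ℕ, (k : ℂ) * ((-1) ^ k * e k τ) =
      ∑ i ∈ Finset.range k,
        ((i : ℂ) + 1) * expCoeff (i + 1) τ * ((-1) ^ (k - 1 - i) * e (k - 1 - i) τ) := by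
  refine exp_coeff_recursion (c := fun k => (-1 : ℂ) ^ k * e k τ) (p := fun k => expCoeff k τ)
    (P := expSeries τ) rfl ?_ (hasSum_expSeries hτ)
  obtain ⟨ε, hε, h⟩ := he τ hτ
  rw [eventually_nhdsWithin_iff]
  filter_upwards [genRHS_eq hτ, Metric.ball_mem_nhds (0 : ℂ) (pow_pos hε 2)] with w hw hwε hw0
  obtain ⟨z, hz⟩ := IsAlgClosed.exists_pow_nat_eq w two_pos
  have hz0 : z ≠ 0 := by
    rintro rfl
    exact hw0 (by simpa using hz.symm)
  have hzε : ‖z‖ < ε := by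
    rw [mem_ball_zero_iff, ← hz, norm_pow] at hwε
    exact lt_of_pow_lt_pow_left₀ 2 hε.le hwε
  have h1 := (h z hzε).mul_left z⁻¹
  rw [hw z hz, inv_mul_cancel_left₀ hz0] at h1
  refine h1.congr_fun ?_
  intro k
  rw [← hz, ← pow_mul, pow_succ]
  field_simp

lemma hasLowering_signed_coeff {e : ℕ → ℂ → ℂ}
    (he : ∀ τ : ℂ, 0 < τ.im → ∃ ε > 0, ∀ z : ℂ, ‖z‖ < ε →
      HasSum (fun k : ℕ => (-1 : ℂ) ^ k * e k τ * z ^ (2 * k + 1)) (genRHS τ z)) (k : ℕ) :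
    ∀ τ : ℂ, 0 < τ.im → HasLowering (fun x => (-1) ^ k * e k x)
      (-((π : ℂ) / 2) * if k = 0 then 0 else (-1) ^ (k - 1) * e (k - 1) τ) τ := by
  induction k using Nat.strong_induction_on with
  | _ k ih =>
  intro τ hτ
  have hH : ∀ᶠ x in 𝓝 τ, 0 < x.im := (isOpen_lt continuous_const continuous_im).mem_nhds hτ
  rcases k with _ | k
  · have h1 : HasLowering (fun _ : ℂ => (1 : ℂ)) 0 τ :=
      .of_differentiableAt (differentiableAt_const _)
    have h2 := h1.congr (g := fun x => (-1) ^ 0 * e 0 x) (by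
      filter_upwards [hH] with x hx using (signed_coeff_recursion he hx).1)
    rwa [if_pos rfl, mul_zero]
  have hk : ((k : ℂ) + 1) ≠ 0 := by exact_mod_cast k.succ_ne_zero
  have hterm : ∀ i ∈ Finset.range (k + 1), HasLowering
      (fun x => ((i : ℂ) + 1) * (expCoeff (i + 1) x * ((-1) ^ (k - i) * e (k - i) x))) _ τ :=
    fun i _ => ((hasLowering_expCoeff_succ i hτ).mul
      (ih (k - i) (by omega) τ hτ)).const_mul ((i : ℂ) + 1)
  have hsum := (HasLowering.sum hterm).const_mul (((k : ℂ) + 1)⁻¹)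
  have hcongr := hsum.congr (g := fun x => (-1) ^ (k + 1) * e (k + 1) x) (by
    filter_upwards [hH] with x hx
    have := (signed_coeff_recursion he hx).2 (k + 1)
    rw [eq_inv_mul_iff_mul_eq₀ hk]
    push_cast at this
    rw [this]
    refine Finset.sum_congr rfl fun i _ => ?_
    ring)
  convert hcongr using 1
  rw [eq_inv_mul_iff_mul_eq₀ hk, if_neg k.succ_ne_zero, Nat.add_sub_cancel]
  simp only [mul_add, Finset.sum_add_distrib]
  -- The term `i = 0` contributes `-(π/2) cₖ` through `Ĝ₂`; the other terms contribute
  -- `-(π/2) k cₖ` by the recursion one step earlier.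
  have hfirst : ∑ i ∈ Finset.range (k + 1), ((i : ℂ) + 1) *
      ((if i = 0 then -((π : ℂ) / 2) else 0) * ((-1) ^ (k - i) * e (k - i) τ)) =
      -((π : ℂ) / 2) * ((-1) ^ k * e k τ) := by
    rw [Finset.sum_eq_single 0]
    · simp
    · intro i _ hi
      simp [hi]
    · simp
  have hrest : ∑ i ∈ Finset.range (k + 1), ((i : ℂ) + 1) * (expCoeff (i + 1) τ *
      (-((π : ℂ) / 2) * if k - i = 0 then 0 else (-1) ^ (k - i - 1) * e (k - i - 1) τ)) =
      -((π : ℂ) / 2) * ((k : ℂ) * ((-1) ^ k * e k τ)) := by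
    rw [(signed_coeff_recursion he hτ).2 k, Finset.sum_range_succ, Finset.mul_sum]
    simp only [Nat.sub_self, if_true, mul_zero, add_zero]
    refine Finset.sum_congr rfl fun i hi => ?_
    have := Finset.mem_range.1 hi
    rw [if_neg (by omega), show k - i - 1 = k - 1 - i by omega]
    ring
  rw [hfirst, hrest]
  ring

/-- `e₀(Λ_τ(0)) = 1` for all `τ ∈ ℍ`, and for every `k ≥ 1` the lowering
operator satisfies `L(e_k(Λ_τ(0))) = (π/2)·e_{k−1}(Λ_τ(0))` on ℍ. -/
theorem ek_lowering
    (e : ℕ → ℂ → ℂ)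
    (he : ∀ τ : ℂ, 0 < τ.im → ∃ ε > 0, ∀ z : ℂ, ‖z‖ < ε →
      HasSum (fun k : ℕ => (-1 : ℂ) ^ k * e k τ * z ^ (2 * k + 1)) (genRHS τ z)) :
    (∀ τ : ℂ, 0 < τ.im → e 0 τ = 1) ∧
    (∀ k : ℕ, 1 ≤ k → ∀ τ : ℂ, 0 < τ.im →
      lowerOp (e k) τ = ((π : ℂ) / 2) * e (k - 1) τ) := by
  refine ⟨fun τ hτ => by simpa using (signed_coeff_recursion he hτ).1, fun k hk τ hτ => ?_⟩
  have h := ((hasLowering_signed_coeff he k τ hτ).const_mul ((-1) ^ k)).2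
  obtain ⟨j, rfl⟩ : ∃ j, k = j + 1 := ⟨k - 1, by omega⟩
  have hs : ((-1 : ℂ)) ^ j * (-1) ^ j = 1 := by rw [← mul_pow]; simp
  have hfun : (fun x => (-1 : ℂ) ^ (j + 1) * ((-1) ^ (j + 1) * e (j + 1) x)) = e (j + 1) := by
    funext x
    linear_combination e (j + 1) x * hs
  rw [hfun, if_neg j.succ_ne_zero, Nat.add_sub_cancel] at h
  rw [h, Nat.add_sub_cancel]
  linear_combination ((π : ℂ) / 2 * e j τ) * hs
end
end

section
/- For every τ = u + iv ∈ ℍ and every z in a sufficiently small neighborhood of 0, the modified generating function φ(z;τ) := e^{−πz²/(2v)} ∑_{k≥0} (−1)^k e_k(Λ_τ(0)) z^{2k+1} satisfies φ(z;τ) = −ϑ(z;τ)/(2π η(τ)³); in particular the left-hand side is independent of v beyond its holomorphic dependence on τ. -/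
/-!
Put `w = 2πiz`, `ζ = e^w` and `v = Im τ`. The factor `e^{-πz²/(2v)}` cancels the contribution of
`1/(4πv)` in `Ĝ₂`, so the left-hand side is `z · exp(-∑_{k≥1} G_{2k}(τ) w^{2k}/(2k)!)`. The two
halves of the Eisenstein series are treated separately.

* The Bernoulli part is `z · exp(∑ B_{2k}/(2k) · w^{2k}/(2k)!) = sin(πz)/π`. This is the logarithm
  of Euler's product for the sine, together with the values of the zeta function at even integers
  (`exists_hasSum_bernoulli_sin`).
* The divisor-sum part is `exp(-2 ∑_k ∑_n σ_{2k-1}(n) qⁿ w^{2k}/(2k)!)`. For small `z` the triple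
  series over `n = dc` and `k` converges absolutely; summing over `k` first gives
  `∑_{d,c} (ζ^c + ζ^{-c} - 2) q^{dc}/c`, so the exponential is
  `∏ (1 - ζqⁿ)(1 - ζ⁻¹qⁿ)/(1 - qⁿ)²` (`exists_hasSum_sigma_prod`).

Jacobi's triple product (`jacobi_triple_product`) gives
`ϑ(z;τ) = -2 sin(πz) q^{1/8} ∏ (1 - qⁿ)(1 - ζqⁿ)(1 - ζ⁻¹qⁿ)`, and `η³ = q^{1/8} ∏ (1 - qⁿ)³`, so the
two sides agree. The triple product is itself obtained from its finite form, a `q`-binomial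
identity, by dominated convergence.
-/

open Complex Filter
open scoped Real

noncomputable section

/-- The Jacobi theta function `ϑ(z;τ) = ∑_{n∈ℤ+1/2} e^{2πin(z+1/2)} q^{n²/2}`. -/
def jacobiThetaFn (z τ : ℂ) : ℂ :=
  ∑' n : ℤ, Complex.exp (2 * (π : ℂ) * Complex.I * ((n : ℂ) + 1 / 2) * (z + 1 / 2)) *
    Complex.exp ((π : ℂ) * Complex.I * τ * ((n : ℂ) + 1 / 2) ^ 2)

/-- The Dedekind eta function `η(τ) = q^{1/24} ∏_{n≥1} (1 - qⁿ)`. -/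
def dedekindEtaFn (τ : ℂ) : ℂ :=
  Complex.exp (2 * (π : ℂ) * Complex.I * τ / 24) * ∏' n : ℕ, (1 - qq τ ^ (n + 1))

/-! ### The sine product and Bernoulli numbers -/

/-- The Mercator series of `log (1 - x)`, indexed from its first nonzero term. -/
lemma hasSum_log_one_sub {x : ℂ} (hx : ‖x‖ < 1) :
    HasSum (fun k : ℕ => -(x ^ (k + 1) / ((k : ℂ) + 1))) (Complex.log (1 - x)) := by
  have h := (hasSum_nat_add_iff' 1).mpr (Complex.hasSum_taylorSeries_neg_log hx)
  simpa using h.neg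

/-- The `k`-th Mercator terms of `log (1 - z² / n²)` sum over `n` to a multiple of `ζ(2k + 2)`, which
Euler's formula expresses through a Bernoulli number. -/
lemma hasSum_zeta_column (z : ℂ) (k : ℕ) :
    HasSum (fun n : ℕ => -((z ^ 2 / ((n : ℂ) + 1) ^ 2) ^ (k + 1) / ((k : ℂ) + 1)))
      (((bernoulli (2 * (k + 1)) : ℚ) : ℂ) / (2 * ((k + 1 : ℕ) : ℂ)) *
        (2 * (π : ℂ) * I * z) ^ (2 * (k + 1)) / (Nat.factorial (2 * (k + 1)) : ℂ)) := by
  have h := (hasSum_nat_add_iff' 1).mpr (hasSum_zeta_nat (k := k + 1) (Nat.succ_ne_zero k))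
  have h' := (Complex.hasSum_ofReal.mpr h).mul_left (-(z ^ (2 * (k + 1)) / ((k : ℂ) + 1)))
  have e1 : (fun n : ℕ => -((z ^ 2 / ((n : ℂ) + 1) ^ 2) ^ (k + 1) / ((k : ℂ) + 1))) =
      fun n : ℕ => -(z ^ (2 * (k + 1)) / ((k : ℂ) + 1)) *
        ((1 / ((n + 1 : ℕ) : ℝ) ^ (2 * (k + 1)) : ℝ) : ℂ) := by
    funext n
    push_cast
    rw [div_pow, ← pow_mul, ← pow_mul]
    generalize ((n : ℂ) + 1) ^ (2 * (k + 1)) = y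
    ring
  rw [e1]
  refine Eq.subst (motive := fun a => HasSum _ a) ?_ h'
  have hk : (k : ℂ) + 1 ≠ 0 := Nat.cast_add_one_ne_zero k
  have h2 : 2 * (k + 1) - 1 = 2 * k + 1 := by omega
  have h0 : (0 : ℝ) ^ (2 * (k + 1)) = 0 := by simp
  simp only [h2, Finset.range_one, Finset.sum_singleton, Nat.cast_zero, h0, div_zero, sub_zero]
  push_cast
  have hI : I ^ (2 * (k + 1)) = (-1) ^ (k + 1) := by rw [pow_mul, I_sq]
  rw [mul_pow, mul_pow, mul_pow, hI, pow_succ (-1 : ℂ) (k + 1)]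
  have hf : ((2 * (k + 1)).factorial : ℂ) ≠ 0 := Nat.cast_ne_zero.mpr (Nat.factorial_ne_zero _)
  field_simp
  ring

lemma norm_sq_div_lt_one {z : ℂ} (hz : ‖z‖ < 1) (n : ℕ) : ‖z ^ 2 / ((n : ℂ) + 1) ^ 2‖ < 1 := by
  rw [norm_div, norm_pow, norm_pow, ← Nat.cast_succ, Complex.norm_natCast]
  refine (div_le_self (by positivity) ?_).trans_lt (pow_lt_one₀ (norm_nonneg z) hz two_ne_zero)
  exact one_le_pow₀ (by simp)

lemma summable_sine_log_terms {z : ℂ} (hz : ‖z‖ < 1) :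
    Summable fun p : ℕ × ℕ =>
      -((z ^ 2 / ((p.1 : ℂ) + 1) ^ 2) ^ (p.2 + 1) / ((p.2 : ℂ) + 1)) := by
  have hz2 : ‖z‖ ^ 2 < 1 := pow_lt_one₀ (norm_nonneg z) hz two_ne_zero
  have h1 : Summable fun n : ℕ => 1 / ((n : ℝ) + 1) ^ 2 := by
    have := (summable_nat_add_iff 1).mpr (Real.summable_one_div_nat_pow.mpr one_lt_two)
    simpa using this
  have h2 : Summable fun k : ℕ => (‖z‖ ^ 2) ^ k :=
    summable_geometric_of_lt_one (by positivity) hz2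
  have h3 : Summable fun p : ℕ × ℕ => 1 / ((p.1 : ℝ) + 1) ^ 2 * (‖z‖ ^ 2) ^ p.2 :=
    h1.mul_of_nonneg h2 (fun _ => by positivity) (fun _ => by positivity)
  refine Summable.of_norm_bounded h3 ?_
  rintro ⟨n, k⟩
  have hn1 : ∀ n : ℕ, ‖(n : ℂ) + 1‖ = (n : ℝ) + 1 := fun n => by
    rw [← Nat.cast_succ, Complex.norm_natCast, Nat.cast_succ]
  have hle1 : 1 / ((n : ℝ) + 1) ^ 2 ≤ 1 := by
    rw [div_le_one (by positivity)]
    exact one_le_pow₀ (by simp)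
  rw [norm_neg, norm_div, hn1, norm_pow, norm_div, norm_pow, norm_pow, hn1]
  refine (div_le_self (by positivity) (by simp)).trans ?_
  rw [div_eq_mul_one_div, mul_pow, mul_comm]
  refine mul_le_mul ?_ ?_ (by positivity) (by positivity)
  · rw [pow_succ]
    exact mul_le_of_le_one_left (by positivity) (pow_le_one₀ (by positivity) hle1)
  · exact pow_le_pow_of_le_one (by positivity) hz2.le (Nat.le_succ k)

/-- Exponential form of Euler's sine product: expanding each `log (1 - z² / n²)` and summing over
`n` first produces the zeta values `ζ(2k)`, that is, Bernoulli numbers. -/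
lemma exists_hasSum_bernoulli_sin {z : ℂ} (hz : ‖z‖ < 1) :
    ∃ s : ℂ, HasSum (fun k : ℕ => ((bernoulli (2 * (k + 1)) : ℚ) : ℂ) / (2 * ((k + 1 : ℕ) : ℂ)) *
        (2 * (π : ℂ) * I * z) ^ (2 * (k + 1)) / (Nat.factorial (2 * (k + 1)) : ℂ)) s ∧
      (π : ℂ) * z * Complex.exp s = Complex.sin (π * z) := by
  have hs := (summable_sine_log_terms hz).hasSum
  have hrow : ∀ n : ℕ,
      HasSum (fun k : ℕ => -((z ^ 2 / ((n : ℂ) + 1) ^ 2) ^ (k + 1) / ((k : ℂ) + 1)))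
        (Complex.log (1 - z ^ 2 / ((n : ℂ) + 1) ^ 2)) :=
    fun n => hasSum_log_one_sub (norm_sq_div_lt_one hz n)
  have hlog : HasSum (fun n : ℕ => Complex.log (1 - z ^ 2 / ((n : ℂ) + 1) ^ 2)) _ :=
    HasSum.prod_fiberwise hs hrow
  have hswap : HasSum (fun p : ℕ × ℕ =>
      -((z ^ 2 / ((p.2 : ℂ) + 1) ^ 2) ^ (p.1 + 1) / ((p.1 : ℂ) + 1))) _ :=
    (Equiv.prodComm ℕ ℕ).hasSum_iff.mpr hs
  refine ⟨_, hswap.prod_fiberwise (hasSum_zeta_column z), ?_⟩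
  have hprod := hlog.cexp.tendsto_prod_nat
  have hne : ∀ n : ℕ, 1 - z ^ 2 / ((n : ℂ) + 1) ^ 2 ≠ 0 := fun n h => by
    have := norm_sq_div_lt_one hz n
    rw [← sub_eq_zero.mp h, norm_one] at this
    exact lt_irrefl _ this
  simp only [Function.comp_apply, Complex.exp_log (hne _)] at hprod
  exact tendsto_nhds_unique (hprod.const_mul _) (Complex.tendsto_euler_sin_prod z)

/-! ### The Jacobi triple product -/

/-- The finite `q`-Pochhammer product `(q; q)_n = ∏_{k=1}^{n} (1 - q^k)`. -/
def qPoch (q : ℂ) (n : ℕ) : ℂ := ∏ k ∈ Finset.range n, (1 - q ^ (k + 1))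

/-- The Gaussian binomial coefficient, defined by the `q`-Pascal recurrence. -/
def qBinom (q : ℂ) : ℕ → ℕ → ℂ
  | _, 0 => 1
  | 0, _ + 1 => 0
  | n + 1, m + 1 => qBinom q n m + q ^ (m + 1) * qBinom q n (m + 1)

lemma qBinom_zero_right (q : ℂ) (n : ℕ) : qBinom q n 0 = 1 := by
  cases n <;> rfl

lemma qBinom_succ_succ (q : ℂ) (n m : ℕ) :
    qBinom q (n + 1) (m + 1) = qBinom q n m + q ^ (m + 1) * qBinom q n (m + 1) := rfl

lemma qBinom_eq_zero (q : ℂ) {n m : ℕ} (h : n < m) : qBinom q n m = 0 := by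
  induction n generalizing m with
  | zero =>
    obtain ⟨m, rfl⟩ := Nat.exists_eq_succ_of_ne_zero h.ne'
    rfl
  | succ n ih =>
    obtain ⟨m, rfl⟩ := Nat.exists_eq_succ_of_ne_zero (by omega : m ≠ 0)
    rw [Nat.succ_eq_add_one, qBinom_succ_succ, ih (by omega), ih (by omega)]
    simp

lemma qPoch_succ (q : ℂ) (n : ℕ) : qPoch q (n + 1) = qPoch q n * (1 - q ^ (n + 1)) :=
  Finset.prod_range_succ _ _

lemma qPoch_zero (q : ℂ) : qPoch q 0 = 1 := Finset.prod_range_zero _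

lemma qBinom_mul_qPoch (q : ℂ) (a b : ℕ) :
    qBinom q (a + b) a * qPoch q a * qPoch q b = qPoch q (a + b) := by
  induction h : a + b generalizing a b with
  | zero =>
    obtain ⟨rfl, rfl⟩ : a = 0 ∧ b = 0 := by omega
    simp [qBinom_zero_right, qPoch_zero]
  | succ N ih =>
    rcases a with _ | a
    · obtain rfl : b = N + 1 := by omega
      simp [qBinom_zero_right, qPoch_zero]
    · have h1 := ih a b (by omega)
      rw [qBinom_succ_succ, qPoch_succ, qPoch_succ q N]
      rcases b with _ | b
      · obtain rfl : N = a := by omega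
        rw [qBinom_eq_zero q (Nat.lt_succ_self N)]
        linear_combination (1 - q ^ (N + 1)) * h1
      · have h2 := ih (a + 1) b (by omega)
        rw [qPoch_succ] at h1 h2 ⊢
        have hN : N = a + b + 1 := by omega
        have hq : q ^ (N + 1) = q ^ (a + 1) * q ^ (b + 1) := by rw [← pow_add]; congr 1; omega
        rw [hq]
        linear_combination (1 - q ^ (a + 1)) * h1 + q ^ (a + 1) * (1 - q ^ (b + 1)) * h2

/-- The finite `q`-binomial theorem. -/
lemma prod_one_add_mul_pow (q x : ℂ) (N : ℕ) :
    ∏ k ∈ Finset.range N, (1 + x * q ^ k) =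
      ∑ m ∈ Finset.range (N + 1), qBinom q N m * q ^ (m.choose 2) * x ^ m := by
  induction N generalizing x with
  | zero => simp [qBinom_zero_right]
  | succ N ih =>
    rw [Finset.prod_range_succ']
    have h : ∏ k ∈ Finset.range N, (1 + x * q ^ (k + 1)) =
        ∏ k ∈ Finset.range N, (1 + x * q * q ^ k) :=
      Finset.prod_congr rfl fun k _ => by ring
    rw [h, ih, Finset.sum_range_succ' _ (N + 1)]
    have h1 : ∑ m ∈ Finset.range (N + 1), qBinom q N m * q ^ (m.choose 2) * (x * q) ^ m =
        ∑ m ∈ Finset.range (N + 1),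
          qBinom q N (m + 1) * q ^ ((m + 1).choose 2) * (x * q) ^ (m + 1) + 1 := by
      rw [Finset.sum_range_succ', Finset.sum_range_succ _ N, qBinom_eq_zero q (Nat.lt_succ_self N)]
      simp [qBinom_zero_right]
    rw [pow_zero, mul_one, mul_add, mul_one]
    conv_lhs => enter [1]; rw [h1]
    rw [Finset.sum_mul, add_right_comm, ← Finset.sum_add_distrib]
    simp only [qBinom_zero_right, pow_zero, Nat.choose_zero_succ, mul_one]
    congr 1
    refine Finset.sum_congr rfl fun m _ => ?_
    rw [qBinom_succ_succ, Nat.choose_succ_succ, Nat.choose_one_right]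
    ring

lemma qPoch_ne_zero {q : ℂ} (hq : ‖q‖ < 1) (n : ℕ) : qPoch q n ≠ 0 := by
  refine Finset.prod_ne_zero_iff.mpr fun k _ h => ?_
  have h1 : ‖q ^ (k + 1)‖ = 1 := by rw [← sub_eq_zero.mp h, norm_one]
  rw [norm_pow] at h1
  exact (pow_lt_one₀ (norm_nonneg q) hq k.succ_ne_zero).ne h1

lemma tendsto_qPoch {q : ℂ} (hq : ‖q‖ < 1) :
    Tendsto (qPoch q) atTop (nhds (∏' n : ℕ, (1 - q ^ (n + 1)))) :=
  (ModularForm.multipliable_one_sub_pow hq).tendsto_prod_tprod_nat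

lemma tprod_one_sub_pow_ne_zero {q : ℂ} (hq : ‖q‖ < 1) : ∏' n : ℕ, (1 - q ^ (n + 1)) ≠ 0 := by
  simp_rw [sub_eq_add_neg]
  refine tprod_one_add_ne_zero_of_summable (fun i h => ?_) ?_
  · have h1 : ‖q ^ (i + 1)‖ = 1 := by
      rw [← sub_eq_zero.mp ((sub_eq_add_neg _ _).trans h), norm_one]
    rw [norm_pow] at h1
    exact (pow_lt_one₀ (norm_nonneg q) hq i.succ_ne_zero).ne h1
  · simpa using (summable_nat_add_iff 1).mpr (summable_geometric_of_lt_one (norm_nonneg _) hq)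

lemma qBinom_eq_div {q : ℂ} (hq : ‖q‖ < 1) (a b : ℕ) :
    qBinom q (a + b) a = qPoch q (a + b) * (qPoch q a)⁻¹ * (qPoch q b)⁻¹ := by
  rw [← qBinom_mul_qPoch]
  field_simp [qPoch_ne_zero hq a, qPoch_ne_zero hq b]

/-- The Gaussian binomials are bounded uniformly in both arguments. -/
lemma exists_norm_qBinom_le {q : ℂ} (hq : ‖q‖ < 1) :
    ∃ C : ℝ, ∀ a b : ℕ, ‖qBinom q (a + b) a‖ ≤ C := by
  obtain ⟨C₁, h₁⟩ := (Metric.isBounded_range_of_tendsto _ (tendsto_qPoch hq)).exists_norm_le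
  obtain ⟨C₂, h₂⟩ := (Metric.isBounded_range_of_tendsto _
    ((tendsto_qPoch hq).inv₀ (tprod_one_sub_pow_ne_zero hq))).exists_norm_le
  have h₁' : ∀ n, ‖qPoch q n‖ ≤ C₁ := fun n => h₁ _ ⟨n, rfl⟩
  have h₂' : ∀ n, ‖(qPoch q n)⁻¹‖ ≤ C₂ := fun n => h₂ _ ⟨n, rfl⟩
  have hC₁ : 0 ≤ C₁ := (norm_nonneg _).trans (h₁' 0)
  have hC₂ : 0 ≤ C₂ := (norm_nonneg _).trans (h₂' 0)
  refine ⟨C₁ * C₂ * C₂, fun a b => ?_⟩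
  rw [qBinom_eq_div hq, norm_mul, norm_mul]
  exact mul_le_mul (mul_le_mul (h₁' _) (h₂' _) (norm_nonneg _) hC₁) (h₂' _) (norm_nonneg _)
    (mul_nonneg hC₁ hC₂)

/-- The finite form of the Jacobi triple product. The weights `t j`, which stand for
`(-ζ)^j q^{j(j+1)/2}`, enter only through their first-order recurrence. -/
lemma finite_triple_product {q ζ : ℂ} (hq : q ≠ 0) (hζ : ζ ≠ 0) {t : ℤ → ℂ} (t0 : t 0 = 1)
    (ht : ∀ j : ℤ, t (j + 1) = -ζ * q ^ (j + 1) * t j) (n : ℕ) :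
    (∏ k ∈ Finset.range n, (1 - ζ * q ^ (k + 1))) * ∏ k ∈ Finset.range n, (1 - ζ⁻¹ * q ^ k) =
      ∑ m ∈ Finset.range (n + n + 1), qBinom q (n + n) m * t (m - n) := by
  set x : ℂ := -ζ * q ^ (1 - (n : ℤ)) with hx
  have htm : ∀ m : ℕ, t (m - n) = t (-n) * (q ^ (m.choose 2) * x ^ m) := fun m => by
    induction m with
    | zero => simp
    | succ m ih =>
      have h1 : ((m + 1 : ℕ) : ℤ) - n = (m - n : ℤ) + 1 := by push_cast; ring
      have h2 : q ^ ((m : ℤ) - n + 1) = q ^ m * q ^ (1 - (n : ℤ)) := by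
        rw [← zpow_natCast, ← zpow_add₀ hq]; congr 1; ring
      rw [h1, ht, ih, h2, Nat.choose_succ_succ, Nat.choose_one_right, hx]
      ring
  have htn : ∀ n : ℕ, t (-n) * ∏ k ∈ Finset.range n, (-ζ * (q ^ k)⁻¹) = 1 := fun n => by
    induction n with
    | zero => simp [t0]
    | succ n ih =>
      have h1 : t (-(n : ℤ)) = -ζ * (q ^ n)⁻¹ * t (-((n + 1 : ℕ) : ℤ)) := by
        have := ht (-((n + 1 : ℕ) : ℤ))
        rwa [show -((n + 1 : ℕ) : ℤ) + 1 = -(n : ℤ) by push_cast; ring, zpow_neg,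
          zpow_natCast] at this
      rw [Finset.prod_range_succ]
      rw [h1] at ih
      linear_combination ih
  have hsum : ∑ m ∈ Finset.range (n + n + 1), qBinom q (n + n) m * t (m - n) =
      t (-n) * ∏ k ∈ Finset.range (n + n), (1 + x * q ^ k) := by
    rw [prod_one_add_mul_pow, Finset.mul_sum]
    exact Finset.sum_congr rfl fun m _ => by rw [htm]; ring
  have hhigh : ∀ k ∈ Finset.range n, 1 + x * q ^ (n + k) = 1 - ζ * q ^ (k + 1) := fun k _ => by
    have : q ^ (1 - (n : ℤ)) * q ^ (n + k) = q ^ (k + 1) := by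
      rw [← zpow_natCast, ← zpow_natCast, ← zpow_add₀ hq]; congr 1; push_cast; ring
    rw [hx, mul_assoc, this]; ring
  have hlow : ∀ k ∈ Finset.range n, 1 + x * q ^ (n - 1 - k) =
      (-ζ * (q ^ k)⁻¹) * (1 - ζ⁻¹ * q ^ k) := fun k hk => by
    have hk := Finset.mem_range.mp hk
    have : q ^ (1 - (n : ℤ)) * q ^ (n - 1 - k) = (q ^ k)⁻¹ := by
      rw [← zpow_natCast, ← zpow_natCast, ← zpow_neg, ← zpow_add₀ hq]; congr 1; omega
    rw [hx, mul_assoc, this]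
    have := pow_ne_zero k hq
    field_simp
    ring
  rw [hsum, Finset.prod_range_add, Finset.prod_congr rfl hhigh,
    ← Finset.prod_range_reflect (fun k => 1 + x * q ^ k), Finset.prod_congr rfl hlow,
    Finset.prod_mul_distrib]
  linear_combination (-(∏ k ∈ Finset.range n, (1 - ζ * q ^ (k + 1))) *
    ∏ k ∈ Finset.range n, (1 - ζ⁻¹ * q ^ k)) * htn n

lemma multipliable_one_sub_mul_pow {q : ℂ} (hq : ‖q‖ < 1) (ζ : ℂ) :
    Multipliable fun n : ℕ => 1 - ζ * q ^ (n + 1) := by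
  simp_rw [sub_eq_add_neg]
  refine Complex.multipliable_one_add_of_summable (Summable.neg (Summable.mul_left ζ ?_))
  exact (summable_nat_add_iff 1).mpr (summable_geometric_of_norm_lt_one hq)

/-- The Jacobi triple product, obtained from its finite form by dominated convergence: the
Gaussian binomials are bounded and `qBinom (2n) (n + j)` tends to `1 / (q; q)_∞`. -/
lemma jacobi_triple_product {q ζ : ℂ} (hq0 : q ≠ 0) (hq : ‖q‖ < 1) (hζ : ζ ≠ 0) {t : ℤ → ℂ}
    (t0 : t 0 = 1) (ht : ∀ j : ℤ, t (j + 1) = -ζ * q ^ (j + 1) * t j) (hs : Summable t) :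
    ∑' j : ℤ, t j = (1 - ζ⁻¹) * (∏' n : ℕ, (1 - q ^ (n + 1))) *
      (∏' n : ℕ, (1 - ζ * q ^ (n + 1))) * ∏' n : ℕ, (1 - ζ⁻¹ * q ^ (n + 1)) := by
  set P : ℂ := ∏' n : ℕ, (1 - q ^ (n + 1)) with hP
  have hP0 : P ≠ 0 := tprod_one_sub_pow_ne_zero hq
  obtain ⟨C, hC⟩ := exists_norm_qBinom_le hq
  have hC0 : 0 ≤ C := (norm_nonneg _).trans (hC 0 0)
  set f : ℕ → ℤ → ℂ := fun n j =>
    if j ∈ Finset.Icc (-(n : ℤ)) n then qBinom q (n + n) (n + j).toNat * t j else 0 with hf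
  have hsplit : ∀ (n : ℕ) (j : ℤ), j ∈ Finset.Icc (-(n : ℤ)) n →
      n + n = (n + j).toNat + (n - j).toNat := fun n j hj => by
    rw [Finset.mem_Icc] at hj; omega
  have hlim : Tendsto (fun n => ∑' j, f n j) atTop (nhds (∑' j, P⁻¹ * t j)) := by
    refine tendsto_tsum_of_dominated_convergence (bound := fun j => C * ‖t j‖)
      (hs.norm.mul_left C) (fun j => ?_) (Eventually.of_forall fun n j => ?_)
    · have ha : Tendsto (fun n : ℕ => (n + j).toNat) atTop atTop :=
        tendsto_atTop_mono (fun n => by omega : ∀ n : ℕ, n - j.natAbs ≤ (n + j).toNat)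
          (tendsto_sub_atTop_nat _)
      have hb : Tendsto (fun n : ℕ => (n - j).toNat) atTop atTop :=
        tendsto_atTop_mono (fun n => by omega : ∀ n : ℕ, n - j.natAbs ≤ (n - j).toNat)
          (tendsto_sub_atTop_nat _)
      have hc : Tendsto (fun n : ℕ => n + n) atTop atTop :=
        tendsto_atTop_mono (fun n => by omega : ∀ n : ℕ, n ≤ n + n) tendsto_id
      have hPt := tendsto_qPoch hq
      have hPi := hPt.inv₀ hP0
      have h := (((hPt.comp hc).mul (hPi.comp ha)).mul (hPi.comp hb)).mul_const (t j)
      rw [← hP, mul_inv_cancel₀ hP0, one_mul] at h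
      refine h.congr' ?_
      filter_upwards [eventually_ge_atTop j.natAbs] with n hn
      have hj : j ∈ Finset.Icc (-(n : ℤ)) n := by rw [Finset.mem_Icc]; omega
      simp only [hf, if_pos hj, Function.comp_apply]
      rw [hsplit n j hj, qBinom_eq_div hq]
    · by_cases hj : j ∈ Finset.Icc (-(n : ℤ)) n
      · simp only [hf, if_pos hj, norm_mul]
        rw [hsplit n j hj]
        exact mul_le_mul_of_nonneg_right (hC _ _) (norm_nonneg _)
      · simp only [hf, if_neg hj, norm_zero]
        positivity
  have hfin : ∀ n, ∑' j, f n j = (∏ k ∈ Finset.range n, (1 - ζ * q ^ (k + 1))) *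
      ∏ k ∈ Finset.range n, (1 - ζ⁻¹ * q ^ k) := fun n => by
    rw [finite_triple_product hq0 hζ t0 ht,
      tsum_eq_sum (s := Finset.Icc (-(n : ℤ)) n) (fun j hj => if_neg hj)]
    refine Finset.sum_nbij' (fun j => (n + j).toNat) (fun m => (m : ℤ) - n) ?_ ?_ ?_ ?_ ?_
    · intro j hj; rw [Finset.mem_Icc] at hj; rw [Finset.mem_range]; omega
    · intro m hm; rw [Finset.mem_range] at hm; rw [Finset.mem_Icc]; omega
    · intro j hj; rw [Finset.mem_Icc] at hj; omega
    · intro m hm; omega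
    · intro j hj
      have : (((n + j).toNat : ℕ) : ℤ) - n = j := by rw [Finset.mem_Icc] at hj; omega
      simp only [if_pos hj, this]
  have hA := (multipliable_one_sub_mul_pow hq ζ).tendsto_prod_tprod_nat
  have hB : Tendsto (fun n => ∏ k ∈ Finset.range n, (1 - ζ⁻¹ * q ^ k)) atTop
      (nhds ((∏' n : ℕ, (1 - ζ⁻¹ * q ^ (n + 1))) * (1 - ζ⁻¹))) := by
    rw [← tendsto_add_atTop_iff_nat 1]
    simp_rw [Finset.prod_range_succ', pow_zero, mul_one]
    exact (multipliable_one_sub_mul_pow hq ζ⁻¹).tendsto_prod_tprod_nat.mul_const _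
  simp_rw [hfin] at hlim
  have h := tendsto_nhds_unique hlim (hA.mul hB)
  rw [tsum_mul_left, inv_mul_eq_iff_eq_mul₀ hP0] at h
  rw [h]; ring

/-! ### Lambert series and divisor sums -/

/-- The monomials of the triple series obtained by expanding
`∑_{d, c ≥ 1} (ζ^c + ζ^{-c} - 2) q^{dc} / c` in powers of `w`, where `ζ = e^w`. -/
def lambertTerm (q w : ℂ) (p : (ℕ+ × ℕ+) × ℕ) : ℂ :=
  2 * (((p.1.2 : ℕ) : ℂ) * w) ^ (2 * (p.2 + 1)) / (Nat.factorial (2 * (p.2 + 1)) : ℂ) *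
    (q ^ ((p.1.1 : ℕ) * (p.1.2 : ℕ)) / ((p.1.2 : ℕ) : ℂ))

lemma norm_lambertTerm (q w : ℂ) (d c : ℕ+) (k : ℕ) :
    ‖lambertTerm q w ((d, c), k)‖ =
      (((c : ℕ) : ℝ) * ‖w‖) ^ (2 * (k + 1)) / (Nat.factorial (2 * (k + 1)) : ℝ) *
        (2 * (‖q‖ ^ ((d : ℕ) * (c : ℕ)) / ((c : ℕ) : ℝ))) := by
  simp only [lambertTerm, norm_mul, norm_div, norm_pow, Complex.norm_natCast, Complex.norm_two]
  ring

lemma hasSum_norm_lambertTerm (q w : ℂ) (d c : ℕ+) :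
    HasSum (fun k => ‖lambertTerm q w ((d, c), k)‖)
      ((Real.cosh (((c : ℕ) : ℝ) * ‖w‖) - 1) *
        (2 * (‖q‖ ^ ((d : ℕ) * (c : ℕ)) / ((c : ℕ) : ℝ)))) := by
  simp only [norm_lambertTerm]
  have h := (hasSum_nat_add_iff' 1).mpr (Real.hasSum_cosh (((c : ℕ) : ℝ) * ‖w‖))
  simpa using h.mul_right _

lemma hasSum_lambertTerm_inner (q w : ℂ) (p : ℕ+ × ℕ+) :
    HasSum (fun k => lambertTerm q w (p, k))
      ((Complex.exp w ^ (p.2 : ℕ) + (Complex.exp w)⁻¹ ^ (p.2 : ℕ) - 2) *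
        (q ^ ((p.1 : ℕ) * (p.2 : ℕ)) / ((p.2 : ℕ) : ℂ))) := by
  have h := (hasSum_nat_add_iff' 1).mpr (Complex.hasSum_cosh (((p.2 : ℕ) : ℂ) * w))
  have h' := (h.mul_left 2).mul_right (q ^ ((p.1 : ℕ) * (p.2 : ℕ)) / ((p.2 : ℕ) : ℂ))
  have e1 : (fun k => lambertTerm q w (p, k)) = fun k : ℕ =>
      2 * ((((p.2 : ℕ) : ℂ) * w) ^ (2 * (k + 1)) / (Nat.factorial (2 * (k + 1)) : ℂ)) *
        (q ^ ((p.1 : ℕ) * (p.2 : ℕ)) / ((p.2 : ℕ) : ℂ)) := by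
    funext k
    rw [lambertTerm, mul_div_assoc]
  rw [e1]
  refine Eq.subst (motive := fun a => HasSum _ a) ?_ h'
  rw [← Complex.exp_neg, ← Complex.exp_nat_mul, ← Complex.exp_nat_mul, Complex.cosh, mul_neg]
  simp only [Finset.range_one, Finset.sum_singleton, mul_zero, pow_zero, Nat.factorial_zero,
    Nat.cast_one, div_one]
  ring

lemma summable_lambertTerm {q w : ℂ} (hr : ‖q‖ * Real.exp ‖w‖ < 1) :
    Summable (lambertTerm q w) := by
  refine Summable.of_norm ?_
  rw [summable_prod_of_nonneg (fun _ => norm_nonneg _)]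
  refine ⟨fun p => (hasSum_norm_lambertTerm q w p.1 p.2).summable, ?_⟩
  have hr0 : 0 ≤ ‖q‖ * Real.exp ‖w‖ := by positivity
  have hs := (summable_prod_mul_pow (𝕜 := ℝ) 0 (r := ‖q‖ * Real.exp ‖w‖)
    (by rwa [Real.norm_of_nonneg hr0])).mul_left 2
  refine Summable.of_nonneg_of_le (fun p => tsum_nonneg fun _ => norm_nonneg _) (fun p => ?_) hs
  obtain ⟨d, c⟩ := p
  rw [(hasSum_norm_lambertTerm q w d c).tsum_eq]
  have hc1 : (1 : ℝ) ≤ ((c : ℕ) : ℝ) := by exact_mod_cast c.pos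
  have hx : 0 ≤ ((c : ℕ) : ℝ) * ‖w‖ := by positivity
  have hcosh : Real.cosh (((c : ℕ) : ℝ) * ‖w‖) - 1 ≤ Real.exp ‖w‖ ^ ((d : ℕ) * (c : ℕ)) := by
    have h1 : Real.cosh (((c : ℕ) : ℝ) * ‖w‖) ≤ Real.exp (((c : ℕ) : ℝ) * ‖w‖) := by
      rw [Real.cosh_eq]
      have : Real.exp (-(((c : ℕ) : ℝ) * ‖w‖)) ≤ Real.exp (((c : ℕ) : ℝ) * ‖w‖) :=
        Real.exp_le_exp.mpr (by linarith)
      linarith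
    rw [Real.exp_nat_mul] at h1
    have h2 : Real.exp ‖w‖ ^ (c : ℕ) ≤ Real.exp ‖w‖ ^ ((d : ℕ) * (c : ℕ)) :=
      pow_le_pow_right₀ (Real.one_le_exp (norm_nonneg w)) (Nat.le_mul_of_pos_left _ d.pos)
    linarith
  have hq : ‖q‖ ^ ((d : ℕ) * (c : ℕ)) / ((c : ℕ) : ℝ) ≤ ‖q‖ ^ ((d : ℕ) * (c : ℕ)) :=
    div_le_self (by positivity) hc1
  calc _ ≤ Real.exp ‖w‖ ^ ((d : ℕ) * (c : ℕ)) * (2 * ‖q‖ ^ ((d : ℕ) * (c : ℕ))) :=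
        mul_le_mul hcosh (by linarith) (by positivity) (by positivity)
    _ = _ := by rw [mul_pow, pow_zero]; ring

/-- Summing over `d` and `c` first collects the divisor sums `σ_{2k+1}`. -/
lemma hasSum_lambertTerm_outer {q : ℂ} (hq : ‖q‖ < 1) (w : ℂ) (k : ℕ) :
    HasSum (fun p : ℕ+ × ℕ+ => lambertTerm q w (p, k))
      (2 * (∑' n : ℕ, ((ArithmeticFunction.sigma (2 * (k + 1) - 1)) (n + 1) : ℂ) * q ^ (n + 1)) *
        w ^ (2 * (k + 1)) / (Nat.factorial (2 * (k + 1)) : ℂ)) := by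
  have hs := summable_prod_mul_pow (2 * k + 1) hq
  have h := hs.hasSum
  rw [hs.tsum_prod, tsum_prod_pow_eq_tsum_sigma (2 * k + 1) hq,
    tsum_pnat_eq_tsum_succ (f := fun n => ((ArithmeticFunction.sigma (2 * k + 1)) n : ℂ) * q ^ n)]
    at h
  have h' := h.mul_left (2 * w ^ (2 * (k + 1)) / (Nat.factorial (2 * (k + 1)) : ℂ))
  rw [show 2 * (k + 1) - 1 = 2 * k + 1 by omega]
  have e1 : (fun p : ℕ+ × ℕ+ => lambertTerm q w (p, k)) = fun p : ℕ+ × ℕ+ =>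
      2 * w ^ (2 * (k + 1)) / (Nat.factorial (2 * (k + 1)) : ℂ) *
        (((p.2 : ℕ) : ℂ) ^ (2 * k + 1) * q ^ ((p.1 : ℕ) * (p.2 : ℕ))) := by
    funext p
    have hc : ((p.2 : ℕ) : ℂ) ≠ 0 := Nat.cast_ne_zero.mpr p.2.ne_zero
    rw [lambertTerm, mul_pow, show 2 * (k + 1) = 2 * k + 1 + 1 by ring, pow_succ ((p.2 : ℕ) : ℂ)]
    field_simp
  rw [e1]
  refine Eq.subst (motive := fun a => HasSum _ a) ?_ h'
  ring

lemma hasSum_pnat_log_one_sub {x : ℂ} (hx : ‖x‖ < 1) :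
    HasSum (fun c : ℕ+ => x ^ (c : ℕ) / ((c : ℕ) : ℂ)) (-Complex.log (1 - x)) := by
  rw [← Equiv.pnatEquivNat.symm.hasSum_iff]
  have h := (hasSum_log_one_sub hx).neg
  simpa [Function.comp_def] using h

lemma one_sub_ne_zero_of_norm_lt_one {x : ℂ} (hx : ‖x‖ < 1) : 1 - x ≠ 0 := fun h => by
  rw [← sub_eq_zero.mp h, norm_one] at hx
  exact lt_irrefl _ hx

/-- Minus a logarithm of `∏ (1 - ζ q^d)(1 - ζ⁻¹ q^d) / (1 - q^d)²`, with `ζ = e^w`, as a series in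
`w` whose coefficients are the divisor-sum parts of the Eisenstein series. -/
lemma exists_hasSum_sigma_prod {q w : ℂ} (hr : ‖q‖ * Real.exp ‖w‖ < 1) :
    ∃ s : ℂ, HasSum (fun k : ℕ => 2 *
        (∑' n : ℕ, ((ArithmeticFunction.sigma (2 * (k + 1) - 1)) (n + 1) : ℂ) * q ^ (n + 1)) *
          w ^ (2 * (k + 1)) / (Nat.factorial (2 * (k + 1)) : ℂ)) s ∧
      Complex.exp (-s) * (∏' n : ℕ, (1 - q ^ (n + 1))) ^ 2 =
        (∏' n : ℕ, (1 - Complex.exp w * q ^ (n + 1))) *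
          ∏' n : ℕ, (1 - (Complex.exp w)⁻¹ * q ^ (n + 1)) := by
  have hq : ‖q‖ < 1 :=
    (le_mul_of_one_le_right (norm_nonneg q) (Real.one_le_exp (norm_nonneg w))).trans_lt hr
  -- each of `ζ q^d`, `ζ⁻¹ q^d`, `q^d` lies in the open unit disc
  have hsmall : ∀ (y : ℂ), ‖y‖ ≤ Real.exp ‖w‖ → ∀ d : ℕ, ‖y * q ^ (d + 1)‖ < 1 := fun y hy d => by
    rw [norm_mul, norm_pow, pow_succ]
    calc ‖y‖ * (‖q‖ ^ d * ‖q‖) ≤ Real.exp ‖w‖ * (1 * ‖q‖) := by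
          gcongr
          exact pow_le_one₀ (norm_nonneg q) hq.le
      _ < 1 := by linarith
  have hy1 : ‖Complex.exp w‖ ≤ Real.exp ‖w‖ := by
    rw [Complex.norm_exp]; exact Real.exp_le_exp.mpr (Complex.re_le_norm w)
  have hy2 : ‖(Complex.exp w)⁻¹‖ ≤ Real.exp ‖w‖ := by
    rw [← Complex.exp_neg, Complex.norm_exp, ← norm_neg w]
    exact Real.exp_le_exp.mpr (Complex.re_le_norm (-w))
  have hy3 : ‖(1 : ℂ)‖ ≤ Real.exp ‖w‖ := by
    rw [norm_one]; exact Real.one_le_exp (norm_nonneg w)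
  have hs := (summable_lambertTerm hr).hasSum
  have hswap : HasSum (fun p : ℕ × (ℕ+ × ℕ+) => lambertTerm q w (p.2, p.1)) _ :=
    (Equiv.prodComm ℕ (ℕ+ × ℕ+)).hasSum_iff.mpr hs
  refine ⟨_, hswap.prod_fiberwise (hasSum_lambertTerm_outer hq w), ?_⟩
  have hpair := HasSum.prod_fiberwise hs (hasSum_lambertTerm_inner q w)
  have hrow : ∀ d : ℕ+, HasSum (fun c : ℕ+ =>
      (Complex.exp w ^ (c : ℕ) + (Complex.exp w)⁻¹ ^ (c : ℕ) - 2) *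
        (q ^ ((d : ℕ) * (c : ℕ)) / ((c : ℕ) : ℂ)))
      (-Complex.log (1 - Complex.exp w * q ^ (d : ℕ)) +
        -Complex.log (1 - (Complex.exp w)⁻¹ * q ^ (d : ℕ)) -
          2 * -Complex.log (1 - 1 * q ^ (d : ℕ))) := fun d => by
    have hd : (d : ℕ) = d.natPred + 1 := d.natPred_add_one.symm
    have h1 := hasSum_pnat_log_one_sub (hsmall _ hy1 d.natPred)
    have h2 := hasSum_pnat_log_one_sub (hsmall _ hy2 d.natPred)
    have h3 := hasSum_pnat_log_one_sub (hsmall _ hy3 d.natPred)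
    rw [← hd] at h1 h2 h3
    have h := (h1.add h2).sub (h3.mul_left 2)
    refine Eq.subst (motive := fun f => HasSum f _) (funext fun c => ?_) h
    rw [mul_pow, mul_pow, mul_pow, one_pow, ← pow_mul]
    ring
  have hlog := (HasSum.prod_fiberwise hpair hrow).neg
  rw [← Equiv.pnatEquivNat.symm.hasSum_iff] at hlog
  have hexp := hlog.cexp
  have hP := (ModularForm.multipliable_one_sub_pow hq).hasProd
  have hA := (multipliable_one_sub_mul_pow hq (Complex.exp w)).hasProd
  have hB := (multipliable_one_sub_mul_pow hq (Complex.exp w)⁻¹).hasProd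
  have hl := hexp.mul (hP.mul hP)
  rw [pow_two]
  refine hl.unique ?_
  refine Eq.subst (motive := fun f => HasProd f _) (funext fun d => ?_) (hA.mul hB)
  symm
  have n1 := one_sub_ne_zero_of_norm_lt_one (hsmall _ hy1 d)
  have n2 := one_sub_ne_zero_of_norm_lt_one (hsmall _ hy2 d)
  have n3 := one_sub_ne_zero_of_norm_lt_one (hsmall _ hy3 d)
  simp only [Function.comp_apply, Equiv.pnatEquivNat_symm_apply, Nat.succPNat_coe,
    Nat.succ_eq_add_one]
  rw [show ∀ a b c : ℂ, -(-a + -b - 2 * -c) = a + b - (c + c) from fun a b c => by ring,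
    Complex.exp_sub, Complex.exp_add, Complex.exp_add, Complex.exp_log n1, Complex.exp_log n2,
    Complex.exp_log n3]
  rw [one_mul] at n3 ⊢
  field_simp

/-! ### Theta, eta and the generating function -/

lemma norm_qq_lt_one {τ : ℂ} (hτ : 0 < τ.im) : ‖qq τ‖ < 1 := by
  rw [qq, Complex.norm_exp, Real.exp_lt_one_iff]
  have : (2 * (π : ℂ) * Complex.I * τ).re = -(2 * π * τ.im) := by simp
  rw [this]
  have := Real.pi_pos
  simp only [Left.neg_neg_iff]
  positivity

/-- The product expansion of `ϑ`, from the triple product with `ζ = e^{2πiz}`. -/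
lemma jacobiThetaFn_eq_prod (z : ℂ) {τ : ℂ} (hτ : 0 < τ.im) :
    jacobiThetaFn z τ = -2 * Complex.sin (π * z) * Complex.exp (2 * (π : ℂ) * Complex.I * τ / 8) *
      ((∏' n : ℕ, (1 - qq τ ^ (n + 1))) *
        ((∏' n : ℕ, (1 - Complex.exp (2 * (π : ℂ) * Complex.I * z) * qq τ ^ (n + 1))) *
          ∏' n : ℕ, (1 - (Complex.exp (2 * (π : ℂ) * Complex.I * z))⁻¹ * qq τ ^ (n + 1)))) := by
  have key := jacobi_triple_product (q := qq τ) (ζ := Complex.exp (2 * (π : ℂ) * Complex.I * z))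
    (Complex.exp_ne_zero _) (norm_qq_lt_one hτ) (Complex.exp_ne_zero _)
    (t := fun j => jacobiTheta₂_term j (z + 1 / 2 + τ / 2) τ)
    (by simp [jacobiTheta₂_term])
    (fun j => by
      simp only [jacobiTheta₂_term, qq]
      rw [← Complex.exp_int_mul, neg_mul, ← neg_one_mul, ← Complex.exp_pi_mul_I,
        ← Complex.exp_add, ← Complex.exp_add, ← Complex.exp_add]
      congr 1
      push_cast
      ring)
    ((summable_jacobiTheta₂_term_iff _ τ).mpr hτ)
  have hterm : ∀ n : ℤ, Complex.exp (2 * (π : ℂ) * Complex.I * ((n : ℂ) + 1 / 2) * (z + 1 / 2)) *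
      Complex.exp ((π : ℂ) * Complex.I * τ * ((n : ℂ) + 1 / 2) ^ 2) =
      Complex.I * Complex.exp (π * Complex.I * z) * Complex.exp (2 * (π : ℂ) * Complex.I * τ / 8) *
        jacobiTheta₂_term n (z + 1 / 2 + τ / 2) τ := fun n => by
    rw [jacobiTheta₂_term]
    nth_rewrite 3 [← Complex.exp_pi_div_two_mul_I]
    rw [← Complex.exp_add, ← Complex.exp_add, ← Complex.exp_add, ← Complex.exp_add]
    congr 1
    ring
  have hsin : Complex.I * Complex.exp (π * Complex.I * z) *
      (1 - (Complex.exp (2 * (π : ℂ) * Complex.I * z))⁻¹) = -2 * Complex.sin (π * z) := by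
    rw [← Complex.exp_neg, mul_sub, mul_one, mul_assoc Complex.I, ← Complex.exp_add, Complex.sin,
      show (π : ℂ) * Complex.I * z + -(2 * π * Complex.I * z) = -(π * z) * Complex.I by ring,
      show (π : ℂ) * Complex.I * z = π * z * Complex.I by ring]
    ring
  rw [jacobiThetaFn, tsum_congr hterm, tsum_mul_left, key, ← hsin]
  ring

lemma dedekindEtaFn_pow_three (τ : ℂ) : dedekindEtaFn τ ^ 3 =
    Complex.exp (2 * (π : ℂ) * Complex.I * τ / 8) * (∏' n : ℕ, (1 - qq τ ^ (n + 1))) ^ 3 := by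
  rw [dedekindEtaFn, mul_pow, ← Complex.exp_nat_mul]
  congr 2
  push_cast
  ring

/-- Multiplication by `e^{-πz²/(2v)}` cancels the non-holomorphic part of `Ĝ₂`; what remains is the
product of the exponentials of the Bernoulli part and of the divisor-sum part, which the product
expansions identify with the theta quotient. -/
lemma exp_mul_genRHS {τ : ℂ} (hτ : 0 < τ.im) {z : ℂ} (hz : ‖z‖ < 1)
    (hr : ‖qq τ‖ * Real.exp ‖2 * (π : ℂ) * Complex.I * z‖ < 1) :
    Complex.exp (-(π : ℂ) * z ^ 2 / (2 * (τ.im : ℂ))) * genRHS τ z =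
      -jacobiThetaFn z τ / (2 * (π : ℂ) * dedekindEtaFn τ ^ 3) := by
  obtain ⟨s₁, h₁, e₁⟩ := exists_hasSum_bernoulli_sin hz
  obtain ⟨s₂, h₂, e₂⟩ := exists_hasSum_sigma_prod hr
  have hP := tprod_one_sub_pow_ne_zero (norm_qq_lt_one hτ)
  have hG : HasSum (fun k : ℕ => Gser (k + 1) τ * (2 * (π : ℂ) * Complex.I * z) ^ (2 * (k + 1)) /
      (Nat.factorial (2 * (k + 1)) : ℂ)) (s₂ - s₁) := by
    refine Eq.subst (motive := fun f => HasSum f _) (funext fun k => ?_) (h₂.sub h₁)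
    rw [Gser]
    ring
  have hG' := ((hasSum_nat_add_iff' 1).mpr hG).tsum_eq
  simp only [Finset.range_one, Finset.sum_singleton, add_assoc, Nat.reduceAdd, zero_add,
    mul_one, Nat.factorial_two, Nat.cast_ofNat] at hG'
  have hv : (τ.im : ℂ) ≠ 0 := Complex.ofReal_ne_zero.mpr hτ.ne'
  have hpi : (π : ℂ) ≠ 0 := Complex.ofReal_ne_zero.mpr Real.pi_ne_zero
  have hgen : Complex.exp (-(π : ℂ) * z ^ 2 / (2 * (τ.im : ℂ))) * genRHS τ z =
      z * Complex.exp s₁ * Complex.exp (-s₂) := by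
    rw [genRHS, hG', Ghat2, mul_left_comm, ← Complex.exp_add, mul_assoc z,
      ← Complex.exp_add]
    congr 2
    field_simp
    ring_nf
    rw [Complex.I_sq]
    ring
  have he8 := Complex.exp_ne_zero (2 * (π : ℂ) * Complex.I * τ / 8)
  rw [hgen, jacobiThetaFn_eq_prod z hτ, dedekindEtaFn_pow_three, ← e₂, ← e₁]
  field_simp

/-- For every `τ = u+iv ∈ ℍ` and every `z` in a sufficiently small
neighborhood of `0`, the modified generating function
`φ(z;τ) = e^{−πz²/(2v)} ∑_{k≥0} (−1)^k e_k(Λ_τ(0)) z^{2k+1}` equals `−ϑ(z;τ)/(2πη(τ)³)`. -/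
theorem modified_generating_function_eq_theta_over_eta
    (e : ℕ → ℂ → ℂ)
    (he : ∀ τ : ℂ, 0 < τ.im → ∃ ε > 0, ∀ z : ℂ, ‖z‖ < ε →
      HasSum (fun k : ℕ => (-1 : ℂ) ^ k * e k τ * z ^ (2 * k + 1)) (genRHS τ z))
    (τ : ℂ) (hτ : 0 < τ.im) :
    ∃ ε > 0, ∀ z : ℂ, ‖z‖ < ε →
      HasSum (fun k : ℕ =>
          Complex.exp (-(π : ℂ) * z ^ 2 / (2 * (τ.im : ℂ))) *
            ((-1 : ℂ) ^ k * e k τ * z ^ (2 * k + 1)))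
        (-jacobiThetaFn z τ / (2 * (π : ℂ) * dedekindEtaFn τ ^ 3)) := by
  obtain ⟨ε₀, hε₀, h⟩ := he τ hτ
  have hcont : ContinuousAt
      (fun z : ℂ => ‖qq τ‖ * Real.exp ‖2 * (π : ℂ) * Complex.I * z‖) 0 := by fun_prop
  have hev := hcont.eventually_lt_const (u := 1) (by simpa using norm_qq_lt_one hτ)
  obtain ⟨δ, hδ, hball⟩ := Metric.eventually_nhds_iff.mp hev
  refine ⟨min ε₀ (min 1 δ), by positivity, fun z hz => ?_⟩
  have hz0 : ‖z‖ < ε₀ := hz.trans_le (min_le_left _ _)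
  have hz1 : ‖z‖ < 1 := hz.trans_le ((min_le_right _ _).trans (min_le_left _ _))
  have hzδ : ‖z‖ < δ := hz.trans_le ((min_le_right _ _).trans (min_le_right _ _))
  rw [← exp_mul_genRHS hτ hz1 (hball (by rwa [dist_zero_right]))]
  exact (h z hz0).mul_left _
end
end
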